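/- Let 1 < p < ∞. Then ∫_ℝ | F_m(ω)^{1/2} − Ψ̂(ω) |^p dω → 0 as m → ∞. In other words, condition (ii) of the limit lemma holds for the orthogonal Daubechies wavelets: the moduli |(ψ_m^D)^∧| converge to Ψ̂ in L^p(ℝ) as m → ∞. -/

import Mathlib

/-! The proof is by dominated convergence, applied to `|√F_m - Ψ̂|^p`.

Write `m = n + 1`. The substitution `t = cos u` gives
`M_m(x) = ∫_{-1}^{cos x} (1 - t²)ⁿ dt / ∫_{-1}^1 (1 - t²)ⁿ dt`, whence `0 ≤ M_m ≤ 1`,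
`M_m(x) + M_m(x + π) = 1`, and `M_m(x) ≤ (n + 1) sin²ⁿ x` where `cos x ≤ 0` (`Mm_le_sin`). So `M_m`
tends to `0` where `cos x < 0` and to `1` where `cos x > 0`, and the pointwise limit of `F_m` follows
for `|ω| ∉ {π, 2π}` (`sqrt_Fm_tendsto`): for `|ω| < π` the first factor of `F_m` vanishes in the
limit, for `|ω| > 2π` some factor of the infinite product does, and for `π < |ω| < 2π` all factors
tend to `1`, with summable control of the defects (`tprod_tendsto_one`).

The majorant has to be uniform in `m`. By the above `M_m ≤ (n + 1) gⁿ`, where `g = sin²` on the stop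
band and `g = 1` on the pass band. Moreover `g(x) ≤ (1 + cos x) max(1, 1 - cos x)`. Along an orbit
`t, 2t, …` of the doubling map the first factors telescope to at most a constant times `2^{-L}`
if `sin² t ≥ 1/2` (`cos_prod`), while the second ones are at most a constant times `(3/2)^L` (`k_prod`). Hence for
`|ω| ≈ 2^L` with `L ≥ 10`, the product of `L` values of `g` is at most `(5/6)^L`, and
`F_m(ω) ≤ ((n + 1) (5/6)ⁿ)^L ≤ 16^{-L}` for all large `n`. This gives `√F_m(ω) ≤ C / ω²` for
`|ω| ≥ 1024 π` (`Fm_decay`), and `|√F_m - Ψ̂|^p ≤ |√F_m - Ψ̂| ≤ 1` takes care of the rest. -/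

open MeasureTheory Filter
open scoped Topology

/-- `c_m = (∫_0^π sin^{2m-1} u du)⁻¹`. -/
noncomputable def cm (m : ℕ) : ℝ :=
  (∫ u in (0:ℝ)..Real.pi, Real.sin u ^ (2 * m - 1))⁻¹

/-- `M_m(ω) = 1 - c_m ∫_0^ω sin^{2m-1} u du`, i.e. `|H_m(ω)|²` for the Daubechies filter. -/
noncomputable def Mm (m : ℕ) (ω : ℝ) : ℝ :=
  1 - cm m * ∫ u in (0:ℝ)..ω, Real.sin u ^ (2 * m - 1)

/-- `F_m(ω) = (1/(2π)) M_m(ω/2 + π) ∏_{l=1}^∞ M_m(2^{-l-1} ω) = |(ψ_m^D)^∧(ω)|²`. -/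
noncomputable def Fm (m : ℕ) (ω : ℝ) : ℝ :=
  (1 / (2 * Real.pi)) * Mm m (ω / 2 + Real.pi) *
    ∏' l : ℕ, Mm m (2 ^ (-((l : ℝ) + 2)) * ω)

/-- `Ψ̂(ω) = (1/√(2π)) (χ_{[-2π,-π]}(ω) + χ_{[π,2π]}(ω))`. -/
noncomputable def PsiHat (ω : ℝ) : ℝ :=
  (1 / Real.sqrt (2 * Real.pi)) *
    ((Set.Icc (-(2 * Real.pi)) (-Real.pi)).indicator (fun _ => (1 : ℝ)) ω +
     (Set.Icc Real.pi (2 * Real.pi)).indicator (fun _ => (1 : ℝ)) ω)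

/-! ### The filter `M_m` as a function of `cos` -/

/-- The substitution `t = cos u` makes `M_{n+1}(x)` a normalized incomplete integral of
`(1 - t²)ⁿ`, hence a function of `cos x` only. -/
theorem Mm_succ (n : ℕ) (x : ℝ) : Mm (n + 1) x =
    (∫ t in (-1)..Real.cos x, (1 - t ^ 2) ^ n) / ∫ t in (-1:ℝ)..1, (1 - t ^ 2) ^ n := by
  have key : ∀ y : ℝ, ∫ u in (0:ℝ)..y, Real.sin u ^ (2 * (n + 1) - 1)
      = ∫ t in Real.cos y..1, (1 - t ^ 2) ^ n := by
    intro y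
    have h := integral_sin_pow_odd_mul_cos_pow (a := 0) (b := y) n 0
    simpa [show 2 * (n + 1) - 1 = 2 * n + 1 by omega] using h
  have hi : ∀ a b : ℝ, IntervalIntegrable (fun t : ℝ => (1 - t ^ 2) ^ n) volume a b := fun a b =>
    Continuous.intervalIntegrable (by fun_prop) a b
  have hA : 0 < ∫ t in (-1:ℝ)..1, (1 - t ^ 2) ^ n := by
    have := integral_sin_pow_pos (n := 2 * (n + 1) - 1)
    rwa [key, Real.cos_pi] at this
  have hsplit := intervalIntegral.integral_add_adjacent_intervals (hi (-1) (Real.cos x))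
    (hi (Real.cos x) 1)
  unfold Mm cm
  rw [key, key, Real.cos_pi]
  field_simp
  linarith

/-- The comparison `1 - t² ≥ 1 - t` on `[0, 1]` shows that the normalizing constant is at most
`n + 1`. -/
theorem J_lower (n : ℕ) : 1 / ((n : ℝ) + 1) ≤ ∫ t in (-1:ℝ)..1, (1 - t ^ 2) ^ n := by
  have hi : ∀ a b : ℝ, IntervalIntegrable (fun t : ℝ => (1 - t ^ 2) ^ n) volume a b := fun a b =>
    Continuous.intervalIntegrable (by fun_prop) a b
  have hsplit := intervalIntegral.integral_add_adjacent_intervals (hi (-1) 0) (hi 0 1)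
  have h1 : 0 ≤ ∫ t in (-1:ℝ)..0, (1 - t ^ 2) ^ n := by
    refine intervalIntegral.integral_nonneg (by norm_num) fun t ht => pow_nonneg ?_ n
    nlinarith [ht.1, ht.2]
  have h2 : ∫ t in (0:ℝ)..1, (1 - t) ^ n ≤ ∫ t in (0:ℝ)..1, (1 - t ^ 2) ^ n := by
    refine intervalIntegral.integral_mono_on (by norm_num)
      (Continuous.intervalIntegrable (by fun_prop) _ _) (hi _ _) fun t ht => ?_
    refine pow_le_pow_left₀ (by linarith [ht.2]) ?_ n
    nlinarith [ht.1, ht.2]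
  have h3 : ∫ t in (0:ℝ)..1, (1 - t) ^ n = 1 / ((n : ℝ) + 1) := by
    rw [intervalIntegral.integral_comp_sub_left (fun t => t ^ n) 1]
    simp
  linarith

theorem Mm_nonneg (n : ℕ) (x : ℝ) : 0 ≤ Mm (n + 1) x := by
  rw [Mm_succ]
  have h0 := J_lower n
  have : (0:ℝ) < 1 / ((n : ℝ) + 1) := by positivity
  refine div_nonneg ?_ (by linarith)
  refine intervalIntegral.integral_nonneg (Real.neg_one_le_cos x) fun t ht => pow_nonneg ?_ n
  nlinarith [ht.1, ht.2, Real.cos_le_one x]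

/-- The quadrature mirror identity `M(x) + M(x + π) = 1`. -/
theorem Mm_add_pi (n : ℕ) (x : ℝ) : Mm (n + 1) (x + Real.pi) = 1 - Mm (n + 1) x := by
  have h0 := J_lower n
  have h0' : (0:ℝ) < 1 / ((n : ℝ) + 1) := by positivity
  have hi : ∀ a b : ℝ, IntervalIntegrable (fun t : ℝ => (1 - t ^ 2) ^ n) volume a b := fun a b =>
    Continuous.intervalIntegrable (by fun_prop) a b
  have hsplit := intervalIntegral.integral_add_adjacent_intervals (hi (-1) (Real.cos x))
    (hi (Real.cos x) 1)
  have hneg := intervalIntegral.integral_comp_neg (a := Real.cos x) (b := 1)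
    (fun t : ℝ => (1 - t ^ 2) ^ n)
  simp only [neg_sq] at hneg
  rw [Mm_succ, Mm_succ, Real.cos_add_pi, ← hneg, ← hsplit, eq_sub_iff_add_eq, ← add_div,
    add_comm, div_self]
  rw [hsplit]; linarith

theorem Mm_le_one (n : ℕ) (x : ℝ) : Mm (n + 1) x ≤ 1 := by
  have := Mm_nonneg n (x + Real.pi)
  rw [Mm_add_pi] at this
  linarith

/-- On the stop band `cos x ≤ 0` the integrand `(1 - t²)ⁿ` on `[-1, cos x]` is largest at the right
endpoint, where it equals `sin²ⁿ x`. -/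
theorem Mm_le_sin (n : ℕ) {x : ℝ} (hx : Real.cos x ≤ 0) :
    Mm (n + 1) x ≤ ((n : ℝ) + 1) * (Real.sin x ^ 2) ^ n := by
  have h0 := J_lower n
  have h0' : (0:ℝ) < 1 / ((n : ℝ) + 1) := by positivity
  have hnum : (∫ t in (-1)..Real.cos x, (1 - t ^ 2) ^ n) ≤ (Real.sin x ^ 2) ^ n := by
    have h1 : (∫ t in (-1)..Real.cos x, (1 - t ^ 2) ^ n)
        ≤ ∫ t in (-1)..Real.cos x, (Real.sin x ^ 2) ^ n := by
      refine intervalIntegral.integral_mono_on (Real.neg_one_le_cos x)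
        (Continuous.intervalIntegrable (by fun_prop) _ _) (by simp) fun t ht => ?_
      refine pow_le_pow_left₀ (by nlinarith [ht.1, ht.2]) ?_ n
      rw [Real.sin_sq]
      nlinarith [ht.1, ht.2]
    rw [intervalIntegral.integral_const, smul_eq_mul] at h1
    refine h1.trans (mul_le_of_le_one_left (by positivity) (by linarith))
  rw [Mm_succ, div_le_iff₀ (by linarith)]
  have h2 : 1 ≤ ((n : ℝ) + 1) * ∫ t in (-1:ℝ)..1, (1 - t ^ 2) ^ n := by
    have := mul_le_mul_of_nonneg_left h0 (by positivity : (0:ℝ) ≤ (n : ℝ) + 1)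
    rwa [mul_one_div_cancel (by positivity)] at this
  have h3 : 0 ≤ (Real.sin x ^ 2) ^ n := by positivity
  nlinarith

theorem Mm_continuous (n : ℕ) : Continuous (Mm (n + 1)) := by
  unfold Mm
  refine continuous_const.sub (continuous_const.mul ?_)
  exact intervalIntegral.continuous_primitive
    (fun a b => Continuous.intervalIntegrable (by fun_prop) a b) 0

/-! ### Infinite products of numbers in `[0, 1]` -/

theorem prod_anti {f : ℕ → ℝ} (h0 : ∀ i, 0 ≤ f i) (h1 : ∀ i, f i ≤ 1) {s t : Finset ℕ}
    (hst : s ⊆ t) : ∏ i ∈ t, f i ≤ ∏ i ∈ s, f i := by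
  rw [← Finset.prod_sdiff hst]
  exact mul_le_of_le_one_left (Finset.prod_nonneg fun i _ => h0 i)
    (Finset.prod_le_one (fun i _ => h0 i) fun i _ => h1 i)

/-- A product of factors in `[0, 1]` converges unconditionally (possibly to `0`), so that `∏'` does
not take its junk value. -/
theorem exists_hasProd {f : ℕ → ℝ} (h0 : ∀ i, 0 ≤ f i) (h1 : ∀ i, f i ≤ 1) :
    HasProd f (∏' i, f i) := by
  have hanti : Antitone fun s : Finset ℕ => ∏ i ∈ s, f i := fun s t hst =>
    prod_anti h0 h1 hst
  have : Multipliable f := by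
    refine ⟨⨅ s : Finset ℕ, ∏ i ∈ s, f i, ?_⟩
    unfold HasProd
    simp only [SummationFilter.unconditional_filter]
    exact tendsto_atTop_ciInf hanti ⟨0, by
      rintro _ ⟨s, rfl⟩
      exact Finset.prod_nonneg fun i _ => h0 i⟩
  exact this.hasProd

theorem tprod_le_prod {f : ℕ → ℝ} (h0 : ∀ i, 0 ≤ f i) (h1 : ∀ i, f i ≤ 1) (s : Finset ℕ) :
    ∏' i, f i ≤ ∏ i ∈ s, f i := by
  have h := exists_hasProd h0 h1
  unfold HasProd at h
  simp only [SummationFilter.unconditional_filter] at h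
  refine le_of_tendsto h ?_
  filter_upwards [eventually_ge_atTop s] with t hst
  exact prod_anti h0 h1 hst

theorem one_sub_sum_le {a : ℕ → ℝ} (h0 : ∀ i, 0 ≤ a i) (h1 : ∀ i, a i ≤ 1) (N : ℕ) :
    1 - ∑ i ∈ Finset.range N, a i ≤ ∏ i ∈ Finset.range N, (1 - a i) := by
  induction N with
  | zero => simp
  | succ N ih =>
    rw [Finset.sum_range_succ, Finset.prod_range_succ]
    have h2 : ∏ i ∈ Finset.range N, (1 - a i) ≤ 1 :=
      Finset.prod_le_one (fun i _ => by linarith [h1 i]) (fun i _ => by linarith [h0 i])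
    nlinarith [h0 N]

/-! ### Products along the doubling map -/

/-- Cohen's pairing argument: the factors `k(y) = max 1 (1 - cos y)` satisfy `k(y) ≤ 3/2` or
`k(y) k(2y) ≤ 9/4`, so that along an orbit of the doubling map they grow like `(3/2)^L`. The
constant `4/3` absorbs a last factor that may be as large as `2`. -/
theorem k_prod (x : ℝ) (L : ℕ) :
    ∏ j ∈ Finset.range L, max 1 (1 - Real.cos (2 ^ j * x)) ≤ 4 / 3 * (3 / 2) ^ L := by
  induction L using Nat.strong_induction_on generalizing x with
  | _ L ih =>
    have hk0 : ∀ y : ℝ, 1 ≤ max 1 (1 - Real.cos y) := fun y => le_max_left _ _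
    have hk2 : ∀ y : ℝ, max 1 (1 - Real.cos y) ≤ 2 := fun y =>
      max_le (by norm_num) (by linarith [Real.neg_one_le_cos y])
    have hstep : ∀ (y : ℝ) (N : ℕ), ∏ j ∈ Finset.range (N + 1), max 1 (1 - Real.cos (2 ^ j * y))
        = max 1 (1 - Real.cos y) *
          ∏ j ∈ Finset.range N, max 1 (1 - Real.cos (2 ^ j * (2 * y))) := by
      intro y N
      rw [Finset.prod_range_succ', mul_comm]
      simp [pow_succ, mul_assoc]
    match L with
    | 0 => norm_num
    | 1 => 
      have := hk2 x
      simp at this ⊢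
      constructor <;> linarith
    | L + 2 =>
      by_cases hc : -(1 / 2) ≤ Real.cos x
      · rw [hstep, pow_succ]
        have h1 := ih (L + 1) (by omega) (2 * x)
        have h2 : max 1 (1 - Real.cos x) ≤ 3 / 2 := max_le (by norm_num) (by linarith)
        refine (mul_le_mul h2 h1 (Finset.prod_nonneg fun i _ => ?_) (by norm_num)).trans_eq
          (by ring)
        exact zero_le_one.trans (hk0 _)
      · rw [hstep, hstep, ← mul_assoc]
        have h1 := ih L (by omega) (2 * (2 * x))
        push Not at hc
        have h2 : max 1 (1 - Real.cos x) * max 1 (1 - Real.cos (2 * x)) ≤ 9 / 4 := by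
          rw [max_eq_right (by linarith), Real.cos_two_mul]
          have := Real.neg_one_le_cos x
          rw [mul_max_of_nonneg _ _ (by linarith)]
          refine max_le (by linarith) ?_
          -- `c ↦ (1 - c) (2 - 2 c²)` increases on `[-1, -1/2]`, to the value `9/4` at `-1/2`
          have ha : 0 ≤ Real.cos x + 1 := by linarith
          have hb : 0 ≤ -(1 / 2) - Real.cos x := by linarith
          nlinarith [mul_nonneg ha hb,
            mul_nonneg (mul_nonneg ha hb) (by linarith : 0 ≤ -Real.cos x)]
        refine (mul_le_mul h2 h1 (Finset.prod_nonneg fun i _ => ?_) (by norm_num)).trans_eq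
          (by ring)
        exact zero_le_one.trans (hk0 _)

/-- Viète's telescoping product, squared. -/
theorem cos_prod (t : ℝ) (L : ℕ) :
    Real.sin t ^ 2 * ∏ j ∈ Finset.range L, (1 + Real.cos (2 ^ j * (2 * t)))
      = (1 / 2) ^ L * Real.sin (2 ^ L * t) ^ 2 := by
  induction L with
  | zero => simp
  | succ L ih =>
    rw [Finset.prod_range_succ, ← mul_assoc, ih,
      show (2:ℝ) ^ L * (2 * t) = 2 * (2 ^ L * t) by ring,
      show (2:ℝ) ^ (L + 1) * t = 2 * (2 ^ L * t) by ring, Real.sin_two_mul, Real.cos_two_mul]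
    ring

/-- Majorant of the `n`-th root of `M_{n+1}`, up to polynomial factors in `n`: it is `sin²` on the
stop band `cos x ≤ 0` and `1` on the pass band. -/
noncomputable def gm (x : ℝ) : ℝ := if Real.cos x ≤ 0 then Real.sin x ^ 2 else 1

theorem gm_nonneg (x : ℝ) : 0 ≤ gm x := by
  unfold gm; split_ifs <;> positivity

theorem gm_le (x : ℝ) : gm x ≤ (1 + Real.cos x) * max 1 (1 - Real.cos x) := by
  unfold gm
  split_ifs with h
  · rw [max_eq_right (by linarith), Real.sin_sq]
    nlinarith
  · push Not at h
    rw [max_eq_left (by linarith)]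
    linarith

/-- Combination of `k_prod` and `cos_prod`: growth `(3/2)^L` against decay `(1/2)^L`. -/
theorem gm_prod {t : ℝ} (ht : 1 / 2 ≤ Real.sin t ^ 2) (L : ℕ) :
    ∏ j ∈ Finset.range L, gm (2 ^ j * (2 * t)) ≤ 8 / 3 * (3 / 4) ^ L := by
  have h1 := k_prod (2 * t) L
  have h2 := cos_prod t L
  have hG : ∏ j ∈ Finset.range L, gm (2 ^ j * (2 * t)) ≤
      (∏ j ∈ Finset.range L, (1 + Real.cos (2 ^ j * (2 * t)))) *
        ∏ j ∈ Finset.range L, max 1 (1 - Real.cos (2 ^ j * (2 * t))) := by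
    rw [← Finset.prod_mul_distrib]
    exact Finset.prod_le_prod (fun i _ => gm_nonneg _) (fun i _ => gm_le _)
  have hP : 0 ≤ ∏ j ∈ Finset.range L, (1 + Real.cos (2 ^ j * (2 * t))) :=
    Finset.prod_nonneg fun i _ => by linarith [Real.neg_one_le_cos (2 ^ i * (2 * t))]
  have hP' : ∏ j ∈ Finset.range L, (1 + Real.cos (2 ^ j * (2 * t))) ≤ 2 * (1 / 2) ^ L := by
    have h3 : (1 / 2 : ℝ) ^ L * Real.sin (2 ^ L * t) ^ 2 ≤ (1 / 2) ^ L :=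
      mul_le_of_le_one_right (by positivity) (Real.sin_sq_le_one _)
    nlinarith
  calc _ ≤ _ := hG
    _ ≤ (2 * (1 / 2) ^ L) * (4 / 3 * (3 / 2) ^ L) :=
        mul_le_mul hP' h1 (Finset.prod_nonneg fun i _ => zero_le_one.trans (le_max_left _ _))
          (by positivity)
    _ = 8 / 3 * ((1 / 2 : ℝ) * (3 / 2)) ^ L := by rw [mul_pow]; ring
    _ = _ := by norm_num

theorem Mm_le_gm (n : ℕ) (x : ℝ) : Mm (n + 1) x ≤ ((n : ℝ) + 1) * gm x ^ n := by
  unfold gm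
  split_ifs with h
  · exact Mm_le_sin n h
  · have := Mm_le_one n x
    have : (0 : ℝ) ≤ n := n.cast_nonneg
    simp
    linarith

/-- `F_m` with the mirror identity applied to its first factor, and with the dyadic scales written
as natural powers of `1/2`. -/
theorem Fm_succ (n : ℕ) (ω : ℝ) : Fm (n + 1) ω = (1 / (2 * Real.pi)) * (1 - Mm (n + 1) (ω / 2)) *
    ∏' l : ℕ, Mm (n + 1) ((1 / 2) ^ l * (ω / 4)) := by
  unfold Fm
  rw [Mm_add_pi]
  congr 2
  ext l
  congr 1
  rw [Real.rpow_neg (by norm_num), Real.rpow_add (by norm_num), Real.rpow_natCast, one_div_pow]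
  norm_num
  ring

/-! ### Size and decay of `F_m` -/

theorem inv_two_pi_le : 1 / (2 * Real.pi) ≤ 1 := by
  rw [div_le_one (by positivity)]
  linarith [Real.pi_gt_three]

theorem Fm_nonneg (n : ℕ) (ω : ℝ) : 0 ≤ Fm (n + 1) ω := by
  rw [Fm_succ]
  have h1 : 0 ≤ 1 - Mm (n + 1) (ω / 2) := by linarith [Mm_le_one n (ω / 2)]
  have h2 : 0 ≤ ∏' l : ℕ, Mm (n + 1) ((1 / 2) ^ l * (ω / 4)) := by
    have h := exists_hasProd (f := fun l => Mm (n + 1) ((1 / 2) ^ l * (ω / 4)))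
      (fun _ => Mm_nonneg n _) (fun _ => Mm_le_one n _)
    unfold HasProd at h
    exact ge_of_tendsto' h fun s => Finset.prod_nonneg fun i _ => Mm_nonneg n _
  positivity

theorem Fm_le_mul_prod (n : ℕ) (ω : ℝ) (s : Finset ℕ) :
    Fm (n + 1) ω ≤ (1 - Mm (n + 1) (ω / 2)) *
      ∏ l ∈ s, Mm (n + 1) ((1 / 2) ^ l * (ω / 4)) := by
  rw [Fm_succ]
  have h1 : 0 ≤ 1 - Mm (n + 1) (ω / 2) := by linarith [Mm_le_one n (ω / 2)]
  have h2 := tprod_le_prod (f := fun l => Mm (n + 1) ((1 / 2) ^ l * (ω / 4)))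
    (fun _ => Mm_nonneg n _) (fun _ => Mm_le_one n _) s
  have h3 : 0 ≤ ∏ l ∈ s, Mm (n + 1) ((1 / 2) ^ l * (ω / 4)) :=
    Finset.prod_nonneg fun i _ => Mm_nonneg n _
  calc _ ≤ (1 / (2 * Real.pi)) * (1 - Mm (n + 1) (ω / 2)) *
        ∏ l ∈ s, Mm (n + 1) ((1 / 2) ^ l * (ω / 4)) := by gcongr
    _ = (1 / (2 * Real.pi)) * ((1 - Mm (n + 1) (ω / 2)) *
        ∏ l ∈ s, Mm (n + 1) ((1 / 2) ^ l * (ω / 4))) := by ring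
    _ ≤ _ := mul_le_of_le_one_left (mul_nonneg h1 h3) inv_two_pi_le

theorem Fm_le_prod (n : ℕ) (ω : ℝ) (s : Finset ℕ) :
    Fm (n + 1) ω ≤ ∏ l ∈ s, Mm (n + 1) ((1 / 2) ^ l * (ω / 4)) :=
  (Fm_le_mul_prod n ω s).trans <| mul_le_of_le_one_left
    (Finset.prod_nonneg fun i _ => Mm_nonneg n _) (by linarith [Mm_nonneg n (ω / 2)])

theorem Fm_le_one (n : ℕ) (ω : ℝ) : Fm (n + 1) ω ≤ 1 := by
  simpa using Fm_le_prod n ω ∅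

theorem Fm_measurable (n : ℕ) : Measurable (Fm (n + 1)) := by
  have h : Measurable fun ω : ℝ => ∏' l : ℕ, Mm (n + 1) ((1 / 2) ^ l * (ω / 4)) := by
    refine measurable_of_tendsto_metrizable
      (f := fun (N : ℕ) (ω : ℝ) => ∏ l ∈ Finset.range N, Mm (n + 1) ((1 / 2) ^ l * (ω / 4)))
      (fun N => ?_) ?_
    · have := Mm_continuous n
      exact Continuous.measurable (by fun_prop)
    · rw [tendsto_pi_nhds]
      intro ω
      exact (exists_hasProd (f := fun l => Mm (n + 1) ((1 / 2) ^ l * (ω / 4)))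
        (fun _ => Mm_nonneg n _) (fun _ => Mm_le_one n _)).tendsto_prod_nat
  have h' := (Mm_continuous n).measurable
  rw [funext (Fm_succ n)]
  fun_prop

/-- Quadratic decay of `√F_{n+1}`, with a constant and a range independent of `n`, as soon as
`(n + 1) (5/6)ⁿ ≤ 1/16`. -/
theorem Fm_decay {n : ℕ} (hn : ((n : ℝ) + 1) * (5 / 6) ^ n ≤ 1 / 16) {ω : ℝ}
    (hω : 1024 * Real.pi ≤ |ω|) : Real.sqrt (Fm (n + 1) ω) ≤ (2 * Real.pi) ^ 2 / ω ^ 2 := by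
  have hpi := Real.pi_pos
  -- `L` is chosen so that `t = 2^(-L) ω / 4` has modulus in `[π/4, π/2)`, whence `sin² t ≥ 1/2`
  obtain ⟨L, hL1, hL2⟩ := exists_nat_pow_near (x := |ω| / Real.pi) (y := 2)
    (by rw [le_div_iff₀ hpi]; linarith) (by norm_num)
  have hL : 10 ≤ L := by
    have h1 : (2:ℝ) ^ 10 < 2 ^ (L + 1) := by
      refine lt_of_le_of_lt ?_ hL2
      rw [le_div_iff₀ hpi]
      norm_num
      exact hω
    have := (pow_lt_pow_iff_right₀ (by norm_num : (1:ℝ) < 2)).1 h1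
    omega
  rw [le_div_iff₀ hpi] at hL1
  rw [div_lt_iff₀ hpi] at hL2
  set t : ℝ := (1 / 2) ^ L * (ω / 4) with ht
  have h2L : (1 / 2 : ℝ) ^ L * 2 ^ L = 1 := by rw [← mul_pow]; norm_num
  have hpos : (0 : ℝ) < (1 / 2) ^ L := by positivity
  have habs : |t| = (1 / 2) ^ L * (|ω| / 4) := by
    rw [ht, abs_mul, abs_div, abs_of_pos hpos]; norm_num
  have ht1 : Real.pi / 4 ≤ |t| := by
    rw [habs]; nlinarith
  have ht2 : |t| ≤ Real.pi / 2 := by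
    rw [habs]; rw [pow_succ] at hL2; nlinarith
  have hsin : 1 / 2 ≤ Real.sin t ^ 2 := by
    have h1 : Real.sin t ^ 2 = Real.sin |t| ^ 2 := by
      rcases abs_choice t with h | h <;> simp [h]
    have h2 : Real.sin (Real.pi / 4) ≤ Real.sin |t| :=
      Real.sin_le_sin_of_le_of_le_pi_div_two (by linarith) ht2 ht1
    have h3 : Real.sin (Real.pi / 4) ^ 2 = 1 / 2 := by
      rw [Real.sin_pi_div_four, div_pow, Real.sq_sqrt (by norm_num)]; norm_num
    rw [h1, ← h3]
    refine pow_le_pow_left₀ ?_ h2 2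
    rw [Real.sin_pi_div_four]; positivity
  have hrefl : ∏ l ∈ Finset.range L, gm ((1 / 2) ^ l * (ω / 4)) =
      ∏ j ∈ Finset.range L, gm (2 ^ j * (2 * t)) := by
    rw [← Finset.prod_range_reflect]
    refine Finset.prod_congr rfl fun j hj => ?_
    have hj' : j < L := Finset.mem_range.1 hj
    congr 1
    rw [ht]
    obtain ⟨k, rfl⟩ : ∃ k, L = j + 1 + k := ⟨L - (j + 1), by omega⟩
    rw [show j + 1 + k - 1 - j = k by omega, pow_add, pow_succ]
    have : (1 / 2 : ℝ) ^ j * 2 ^ j = 1 := by rw [← mul_pow]; norm_num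
    linear_combination (-(1 / 2 : ℝ) ^ k * (ω / 4)) * this
  have hg : ∏ l ∈ Finset.range L, gm ((1 / 2) ^ l * (ω / 4)) ≤ (5 / 6) ^ L := by
    rw [hrefl]
    refine (gm_prod hsin L).trans ?_
    -- `(10/9)^10 > 8/3`: this is where `L ≥ 10`, that is `|ω| ≥ 1024 π`, is needed
    have h1 : (8 / 3 : ℝ) ≤ (10 / 9) ^ L :=
      le_trans (by norm_num) (pow_le_pow_right₀ (by norm_num) hL)
    calc (8 / 3 : ℝ) * (3 / 4) ^ L ≤ (10 / 9) ^ L * (3 / 4) ^ L := by gcongr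
      _ = (5 / 6) ^ L := by rw [← mul_pow]; norm_num
  have hF : Fm (n + 1) ω ≤ ((1 / 4) ^ L) ^ 2 := by
    calc Fm (n + 1) ω ≤ ∏ l ∈ Finset.range L, Mm (n + 1) ((1 / 2) ^ l * (ω / 4)) :=
          Fm_le_prod n ω _
      _ ≤ ∏ l ∈ Finset.range L, (((n : ℝ) + 1) * gm ((1 / 2) ^ l * (ω / 4)) ^ n) :=
          Finset.prod_le_prod (fun _ _ => Mm_nonneg n _) (fun _ _ => Mm_le_gm n _)
      _ = ((n : ℝ) + 1) ^ L * (∏ l ∈ Finset.range L, gm ((1 / 2) ^ l * (ω / 4))) ^ n := by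
          rw [Finset.prod_mul_distrib, Finset.prod_pow]; simp
      _ ≤ ((n : ℝ) + 1) ^ L * ((5 / 6) ^ L) ^ n := by
          gcongr
          exact Finset.prod_nonneg fun _ _ => gm_nonneg _
      _ = (((n : ℝ) + 1) * (5 / 6) ^ n) ^ L := by rw [mul_pow, ← pow_mul, ← pow_mul, mul_comm L]
      _ ≤ (1 / 16) ^ L := by gcongr
      _ = ((1 / 4) ^ L) ^ 2 := by rw [← pow_mul, mul_comm, pow_mul]; norm_num
  refine (Real.sqrt_le_left (by positivity) |>.2 hF).trans ?_
  have hω0 : 0 < ω ^ 2 := by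
    rw [← sq_abs]
    have : 0 < |ω| := by linarith
    positivity
  rw [le_div_iff₀ hω0, ← sq_abs]
  have h4 : ((1 / 2 : ℝ) ^ L * |ω|) ^ 2 ≤ (2 * Real.pi) ^ 2 := by
    refine pow_le_pow_left₀ (by positivity) ?_ 2
    rw [pow_succ] at hL2
    nlinarith
  calc (1 / 4 : ℝ) ^ L * |ω| ^ 2 = ((1 / 2 : ℝ) ^ L * |ω|) ^ 2 := by
        rw [mul_pow, ← pow_mul, mul_comm L 2, pow_mul]; norm_num
    _ ≤ _ := h4

/-! ### Pointwise limits -/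

theorem Mm_tendsto_zero {x : ℝ} (hx : Real.cos x < 0) :
    Tendsto (fun n : ℕ => Mm (n + 1) x) atTop (𝓝 0) := by
  have hs : Real.sin x ^ 2 < 1 := by rw [Real.sin_sq]; nlinarith
  have h1 := (tendsto_self_mul_const_pow_of_lt_one (sq_nonneg _) hs).add
    (tendsto_pow_atTop_nhds_zero_of_lt_one (sq_nonneg _) hs)
  rw [add_zero] at h1
  refine squeeze_zero (fun n => Mm_nonneg n x) (fun n => ?_) h1
  have := Mm_le_sin n hx.le
  linarith

theorem one_sub_Mm_le (n : ℕ) {x : ℝ} (hx : 0 ≤ Real.cos x) :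
    1 - Mm (n + 1) x ≤ ((n : ℝ) + 1) * (Real.sin x ^ 2) ^ n := by
  have := Mm_le_sin n (x := x + Real.pi) (by rw [Real.cos_add_pi]; linarith)
  rwa [Mm_add_pi, Real.sin_add_pi, neg_sq] at this

theorem Mm_tendsto_one {x : ℝ} (hx : 0 < Real.cos x) :
    Tendsto (fun n : ℕ => Mm (n + 1) x) atTop (𝓝 1) := by
  have := Mm_tendsto_zero (x := x + Real.pi) (by rw [Real.cos_add_pi]; linarith)
  simp only [Mm_add_pi] at this
  simpa using (tendsto_const_nhds (x := (1:ℝ))).sub this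

/-- The defects `1 - M_{n+2}(2⁻ˡ y)` are at most `(n + 2) sin²ⁿ(y) · 4⁻ˡ y²`, so that their sum
over `l` tends to `0`. -/
theorem tprod_tendsto_one {y : ℝ} (hy : |y| < Real.pi / 2) :
    Tendsto (fun n : ℕ => ∏' l : ℕ, Mm (n + 1) ((1 / 2) ^ l * y)) atTop (𝓝 1) := by
  have hs : Real.sin y ^ 2 < 1 := by
    have : 0 < Real.cos y := Real.cos_pos_of_mem_Ioo (abs_lt.1 hy)
    rw [Real.sin_sq]; nlinarith
  set q := Real.sin y ^ 2
  have hlow : ∀ n : ℕ, 1 - ((n : ℝ) + 2) * q ^ n * (4 / 3 * y ^ 2) ≤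
      ∏' l : ℕ, Mm (n + 2) ((1 / 2) ^ l * y) := by
    intro n
    have hf := exists_hasProd (f := fun l => Mm (n + 2) ((1 / 2) ^ l * y))
      (fun _ => Mm_nonneg (n + 1) _) (fun _ => Mm_le_one (n + 1) _)
    refine ge_of_tendsto' hf.tendsto_prod_nat fun N => ?_
    have h1 := one_sub_sum_le (a := fun l => 1 - Mm (n + 2) ((1 / 2) ^ l * y))
      (fun _ => by linarith [Mm_le_one (n + 1) ((1 / 2) ^ ‹ℕ› * y)])
      (fun _ => by linarith [Mm_nonneg (n + 1) ((1 / 2) ^ ‹ℕ› * y)]) N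
    simp only [sub_sub_cancel] at h1
    refine le_trans ?_ h1
    have h2 : ∀ l : ℕ, 1 - Mm (n + 2) ((1 / 2) ^ l * y) ≤
        ((n : ℝ) + 2) * q ^ n * y ^ 2 * (1 / 4) ^ l := by
      intro l
      have hle : |(1 / 2) ^ l * y| ≤ |y| := by
        rw [abs_mul, abs_of_pos (by positivity)]
        exact mul_le_of_le_one_left (abs_nonneg _) (pow_le_one₀ (by norm_num) (by norm_num))
      have hc := Real.cos_nonneg_of_mem_Icc (x := (1 / 2) ^ l * y)
        (abs_le.1 (hle.trans hy.le))
      have h3 := one_sub_Mm_le (n + 1) hc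
      have h4 : Real.sin ((1 / 2) ^ l * y) ^ 2 ≤ q := by
        rw [Real.sin_sq, show q = 1 - Real.cos y ^ 2 from Real.sin_sq y]
        have h5 : Real.cos y ≤ Real.cos ((1 / 2) ^ l * y) := by
          rw [← Real.cos_abs, ← Real.cos_abs (_ * _)]
          exact Real.cos_le_cos_of_nonneg_of_le_pi (abs_nonneg _) (by linarith [Real.pi_pos]) hle
        have h6 : 0 ≤ Real.cos y := (Real.cos_pos_of_mem_Ioo (abs_lt.1 hy)).le
        nlinarith
      have h7 : Real.sin ((1 / 2) ^ l * y) ^ 2 ≤ y ^ 2 * (1 / 4) ^ l := by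
        refine (Real.sin_sq_le_sq).trans_eq ?_
        rw [mul_pow, ← pow_mul, mul_comm l 2, pow_mul]; norm_num; ring
      refine h3.trans ?_
      rw [pow_succ]
      push_cast
      rw [show (n : ℝ) + 1 + 1 = n + 2 by ring]
      calc _ ≤ ((n : ℝ) + 2) * (q ^ n * (y ^ 2 * (1 / 4) ^ l)) := by gcongr
        _ = _ := by ring
    have h8 : ∑ l ∈ Finset.range N, (1 / 4 : ℝ) ^ l ≤ 4 / 3 := by
      rw [geom_sum_eq (by norm_num)]
      have : (0:ℝ) < (1 / 4) ^ N := by positivity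
      rw [div_le_iff_of_neg (by norm_num)]
      linarith
    have h9 := Finset.sum_le_sum fun l (_ : l ∈ Finset.range N) => h2 l
    rw [← Finset.mul_sum] at h9
    have h10 : 0 ≤ ((n : ℝ) + 2) * q ^ n * y ^ 2 := by positivity
    nlinarith
  have h1 := ((tendsto_self_mul_const_pow_of_lt_one (sq_nonneg _) hs).add
    ((tendsto_pow_atTop_nhds_zero_of_lt_one (sq_nonneg _) hs).const_mul 2)).mul_const
      (4 / 3 * y ^ 2)
  have h2 := (tendsto_const_nhds (x := (1:ℝ))).sub h1
  rw [← tendsto_add_atTop_iff_nat 1]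
  refine tendsto_of_tendsto_of_tendsto_of_le_of_le (by simpa using h2) tendsto_const_nhds
    (fun n => ?_) (fun n => ?_)
  · refine le_trans (le_of_eq ?_) (hlow n)
    ring
  · simpa using tprod_le_prod (f := fun l => Mm (n + 2) ((1 / 2) ^ l * y))
      (fun _ => Mm_nonneg (n + 1) _) (fun _ => Mm_le_one (n + 1) _) ∅

/-- Away from `±π`, where the closed and half-open intervals differ, `Ψ̂` depends only on `|ω|`. -/
theorem PsiHat_eq (ω : ℝ) (h1 : |ω| ≠ Real.pi) :
    PsiHat ω = if Real.pi < |ω| ∧ |ω| ≤ 2 * Real.pi then 1 / Real.sqrt (2 * Real.pi) else 0 := by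
  have hpi := Real.pi_pos
  unfold PsiHat
  simp only [Set.indicator_apply, Set.mem_Icc]
  rcases le_total 0 ω with h | h
  · rw [abs_of_nonneg h] at *
    have h2 : ¬ (-(2 * Real.pi) ≤ ω ∧ ω ≤ -Real.pi) := fun h3 => by linarith [h3.2]
    have h3 : (Real.pi ≤ ω ∧ ω ≤ 2 * Real.pi) ↔ (Real.pi < ω ∧ ω ≤ 2 * Real.pi) :=
      and_congr_left fun _ => ⟨fun h => lt_of_le_of_ne h h1.symm, le_of_lt⟩
    simp [h2, h3]
  · rw [abs_of_nonpos h] at *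
    have h2 : ¬ (Real.pi ≤ ω ∧ ω ≤ 2 * Real.pi) := fun h3 => by linarith [h3.1]
    have h3 : (-(2 * Real.pi) ≤ ω ∧ ω ≤ -Real.pi) ↔ (Real.pi < -ω ∧ -ω ≤ 2 * Real.pi) := by
      constructor
      · rintro ⟨h4, h5⟩
        exact ⟨lt_of_le_of_ne (by linarith) h1.symm, by linarith⟩
      · rintro ⟨h4, h5⟩
        constructor <;> linarith
    simp [h2, h3]

theorem cos_neg_of_abs {x : ℝ} (h1 : Real.pi / 2 < |x|) (h2 : |x| ≤ Real.pi) : Real.cos x < 0 := by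
  rw [← Real.cos_abs]
  exact Real.cos_neg_of_pi_div_two_lt_of_lt h1 (by linarith [Real.pi_pos])

theorem sqrt_Fm_tendsto {ω : ℝ} (h1 : |ω| ≠ Real.pi) (h2 : |ω| ≠ 2 * Real.pi) :
    Tendsto (fun n : ℕ => Real.sqrt (Fm (n + 1) ω)) atTop (𝓝 (PsiHat ω)) := by
  have hpi := Real.pi_pos
  rw [PsiHat_eq ω h1]
  have hzero : Tendsto (fun n : ℕ => Fm (n + 1) ω) atTop (𝓝 0) →
      Tendsto (fun n : ℕ => Real.sqrt (Fm (n + 1) ω)) atTop (𝓝 0) := fun h => by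
    simpa using h.sqrt
  have habs : |ω / 2| = |ω| / 2 := by rw [abs_div]; norm_num
  have habs4 : |ω / 4| = |ω| / 4 := by rw [abs_div]; norm_num
  split_ifs with h
  · have hlt : |ω| < 2 * Real.pi := lt_of_le_of_ne h.2 h2
    have hA := Mm_tendsto_zero (x := ω / 2) (cos_neg_of_abs (by linarith) (by linarith))
    have hB := tprod_tendsto_one (y := ω / 4) (by linarith)
    have hC := ((hA.const_sub 1).const_mul (1 / (2 * Real.pi))).mul hB
    simp only [← Fm_succ] at hC
    convert hC.sqrt using 2
    simp
  · apply hzero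
    rcases lt_or_gt_of_ne h1 with h3 | h3
    · have hA := Mm_tendsto_one (x := ω / 2)
        (Real.cos_pos_of_mem_Ioo (abs_lt.1 (by linarith)))
      have hA' := hA.const_sub 1
      rw [sub_self] at hA'
      refine squeeze_zero (fun n => Fm_nonneg n ω) (fun n => ?_) hA'
      simpa using Fm_le_mul_prod n ω ∅
    · have h4 : 2 * Real.pi < |ω| := by
        by_contra h5
        exact h ⟨h3, not_lt.1 h5⟩
      -- the first dyadic rescaling of `ω / 4` not exceeding `π` lies in `(π / 2, π]`
      obtain ⟨l, hl1, hl2⟩ : ∃ l : ℕ, Real.pi / 2 < (1 / 2) ^ l * (|ω| / 4) ∧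
          (1 / 2) ^ l * (|ω| / 4) ≤ Real.pi := by
        have hex : ∃ l : ℕ, (1 / 2 : ℝ) ^ l * (|ω| / 4) ≤ Real.pi := by
          have ht := (tendsto_pow_atTop_nhds_zero_of_lt_one (r := (1 / 2 : ℝ)) (by norm_num)
            (by norm_num)).mul_const (|ω| / 4)
          rw [zero_mul] at ht
          exact (ht.eventually_le_const hpi).exists
        classical
        refine ⟨Nat.find hex, ?_, Nat.find_spec hex⟩
        rcases hk : Nat.find hex with _ | k
        · simp only [pow_zero, one_mul]; linarith
        · have := Nat.find_min hex (m := k) (by omega)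
          rw [not_le] at this
          rw [pow_succ]
          linarith
      have hA := Mm_tendsto_zero (x := (1 / 2) ^ l * (ω / 4)) <| by
        have habs' : |(1 / 2) ^ l * (ω / 4)| = (1 / 2) ^ l * (|ω| / 4) := by
          rw [abs_mul, habs4, abs_of_pos (by positivity)]
        exact cos_neg_of_abs (by rwa [habs']) (by rwa [habs'])
      refine squeeze_zero (fun n => Fm_nonneg n ω) (fun n => ?_) hA
      simpa using Fm_le_prod n ω {l}

/-! ### Convergence in `L^p` -/

theorem main_tendsto (p : ℝ) (hp : 1 < p) :
    Tendsto (fun n : ℕ => ∫ ω : ℝ, |Fm (n + 1) ω ^ ((1 : ℝ) / 2) - PsiHat ω| ^ p)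
      atTop (𝓝 0) := by
  have hpi := Real.pi_pos
  have hpi3 := Real.pi_gt_three
  have hp0 : 0 < p := by linarith
  simp only [← Real.sqrt_eq_rpow]
  have hPsi0 : ∀ ω, 0 ≤ PsiHat ω := fun ω => by
    unfold PsiHat
    refine mul_nonneg (by positivity) (add_nonneg ?_ ?_) <;>
      exact Set.indicator_nonneg (fun _ _ => zero_le_one) _
  have hPsim : Measurable PsiHat := by
    unfold PsiHat
    exact ((measurable_const.indicator measurableSet_Icc).add
      (measurable_const.indicator measurableSet_Icc)).const_mul _
  have hPsi1 : ∀ ω, PsiHat ω ≤ 1 := fun ω => by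
    have h1 : 1 / Real.sqrt (2 * Real.pi) ≤ 1 := by
      rw [div_le_one (by positivity), Real.one_le_sqrt]
      linarith
    unfold PsiHat
    refine mul_le_one₀ h1 (add_nonneg ?_ ?_) ?_
    · exact Set.indicator_nonneg (fun _ _ => zero_le_one) _
    · exact Set.indicator_nonneg (fun _ _ => zero_le_one) _
    · simp only [Set.indicator_apply, Set.mem_Icc]
      split_ifs with ha hb
      · linarith [ha.2, hb.1]
      all_goals norm_num
  set C : ℝ := 1 + (1024 * Real.pi) ^ 2 with hC
  have hlim : Tendsto (fun n : ℕ => ((n : ℝ) + 1) * (5 / 6) ^ n) atTop (𝓝 0) := by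
    have h1 := (tendsto_self_mul_const_pow_of_lt_one (r := 5 / 6) (by norm_num) (by norm_num)).add
      (tendsto_pow_atTop_nhds_zero_of_lt_one (r := (5 / 6 : ℝ)) (by norm_num) (by norm_num))
    simpa [add_mul] using h1
  have key := tendsto_integral_filter_of_dominated_convergence (μ := volume) (l := atTop)
    (F := fun (n : ℕ) (ω : ℝ) => |Real.sqrt (Fm (n + 1) ω) - PsiHat ω| ^ p) (f := fun _ => (0:ℝ))
    (fun ω : ℝ => C * (1 + ω ^ 2)⁻¹) ?_ ?_ (integrable_inv_one_add_sq.const_mul C) ?_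
  · simpa using key
  · refine Eventually.of_forall fun n => Measurable.aestronglyMeasurable ?_
    have := Fm_measurable n
    have h2 : Measurable fun ω => |Real.sqrt (Fm (n + 1) ω) - PsiHat ω| :=
      (this.sqrt.sub hPsim).abs
    exact h2.pow_const p
  · filter_upwards [hlim.eventually_le_const (by norm_num : (0:ℝ) < 1 / 16)] with n hn
    refine Eventually.of_forall fun ω => ?_
    have hs0 := Real.sqrt_nonneg (Fm (n + 1) ω)
    have hs1 : Real.sqrt (Fm (n + 1) ω) ≤ 1 := by
      rw [Real.sqrt_le_one]; exact Fm_le_one n ω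
    have hd : |Real.sqrt (Fm (n + 1) ω) - PsiHat ω| ≤ 1 := by
      rw [abs_le]; constructor <;> linarith [hPsi0 ω, hPsi1 ω]
    have hd' : |Real.sqrt (Fm (n + 1) ω) - PsiHat ω| ^ p ≤ |Real.sqrt (Fm (n + 1) ω) - PsiHat ω| :=
      Real.rpow_le_self_of_le_one (abs_nonneg _) hd hp.le
    rw [Real.norm_of_nonneg (by positivity), ← div_eq_mul_inv, le_div_iff₀ (by positivity)]
    rcases le_total (1024 * Real.pi) |ω| with h | h
    · have hP : PsiHat ω = 0 := by
        rw [PsiHat_eq ω (by intro h'; linarith), if_neg]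
        intro h'; linarith [h'.2]
      have h3 := Fm_decay hn h
      rw [hP, sub_zero, abs_of_nonneg hs0] at hd' ⊢
      have h4 : 1 ≤ ω ^ 2 := by
        rw [← sq_abs]; nlinarith
      rw [le_div_iff₀ (by linarith)] at h3
      have h5 : (Real.sqrt (Fm (n + 1) ω)) ^ p * (1 + ω ^ 2) ≤
          Real.sqrt (Fm (n + 1) ω) * (1 + ω ^ 2) := by gcongr
      nlinarith
    · have h4 : ω ^ 2 ≤ (1024 * Real.pi) ^ 2 := by
        rw [← sq_abs]; exact pow_le_pow_left₀ (abs_nonneg _) h 2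
      have := hd'.trans hd
      nlinarith
  · have hnull : ∀ᵐ ω : ℝ, ω ∉ ({Real.pi, -Real.pi, 2 * Real.pi, -(2 * Real.pi)} : Set ℝ) := by
      refine (measure_eq_zero_iff_ae_notMem).1 ?_
      exact (Set.toFinite _).measure_zero _
    filter_upwards [hnull] with ω hω
    simp only [Set.mem_insert_iff, Set.mem_singleton_iff, not_or] at hω
    have h1 : |ω| ≠ Real.pi := fun h => by
      rcases (abs_eq hpi.le).1 h with h | h
      · exact hω.1 h
      · exact hω.2.1 h
    have h2 : |ω| ≠ 2 * Real.pi := fun h => by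
      rcases (abs_eq (by positivity)).1 h with h | h
      · exact hω.2.2.1 h
      · exact hω.2.2.2 h
    have h3 := ((sqrt_Fm_tendsto h1 h2).sub_const (PsiHat ω)).abs
    rw [sub_self, abs_zero] at h3
    simpa [Real.zero_rpow hp0.ne'] using h3.rpow_const (p := p) (Or.inr hp0.le)

theorem stmt5 (p : ℝ) (hp : 1 < p) :
    Tendsto (fun m : ℕ => ∫ ω : ℝ, |Fm m ω ^ ((1 : ℝ) / 2) - PsiHat ω| ^ p)
      atTop (𝓝 0) := by
  -- the truncated exponent `2 * m - 1` is the intended one only for `m ≥ 1`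
  rw [← tendsto_add_atTop_iff_nat 1]
  exact main_tendsto p hp
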